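/- Let n be an even integer with n ≥ 4 and let C ∈ Ω_n. Define X ∈ Ω_n by X_{i,j} = (2(n−1)/(n−2))·μ_element(C) + C_{i,j} − (⟨R_i,C⟩ + ⟨R_j,C⟩)/(n−2) for i ≠ j (and X_{i,i} = 0). Then X ~ C, i.e., ⟨S,X⟩ = ⟨S,C⟩ for every pairing matrix S ∈ 𝕊(n). -/

import Mathlib

open Finset

def hollowSym {n : ℕ} (C : Matrix (Fin n) (Fin n) ℝ) : Prop :=
  C.IsSymm ∧ ∀ i, C i i = 0

noncomputable def innerH {n : ℕ} (X C : Matrix (Fin n) (Fin n) ℝ) : ℝ :=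
  (1 / 2) * ∑ i, ∑ j, X i j * C i j

noncomputable def adjR {n : ℕ} (i : Fin n) : Matrix (Fin n) (Fin n) ℝ :=
  Matrix.of fun k l => if k ≠ l ∧ (i = k ∨ i = l) then 1 else 0

def IsPairing {n : ℕ} (S : Matrix (Fin n) (Fin n) ℝ) : Prop :=
  S.IsSymm ∧ (∀ i, S i i = 0) ∧ (∀ i j, S i j = 0 ∨ S i j = 1) ∧ (∀ i, ∑ j, S i j = 1)

noncomputable def pairings (n : ℕ) : Finset (Matrix (Fin n) (Fin n) ℝ) :=
  (Finset.univ.filter (fun σ : Equiv.Perm (Fin n) => ∀ i, σ i ≠ i ∧ σ (σ i) = i)).image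
    (fun σ => Matrix.of fun i j => if σ i = j then (1 : ℝ) else 0)

noncomputable def pairSum {n : ℕ} (C : Matrix (Fin n) (Fin n) ℝ) : ℝ :=
  ∑ i, ∑ j ∈ Finset.univ.filter (fun j => i < j), C i j

noncomputable def muEl {n : ℕ} (C : Matrix (Fin n) (Fin n) ℝ) : ℝ :=
  (2 / ((n : ℝ) * ((n : ℝ) - 1))) * pairSum C

noncomputable def Jmat (n : ℕ) : Matrix (Fin n) (Fin n) ℝ := Matrix.of fun _ _ => 1

noncomputable def muSum (n : ℕ) (C : Matrix (Fin n) (Fin n) ℝ) : ℝ :=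
  (1 / (Nat.doubleFactorial (n - 1) : ℝ)) * ∑ S ∈ pairings n, innerH S C

noncomputable def sig2El {n : ℕ} (C : Matrix (Fin n) (Fin n) ℝ) : ℝ :=
  (2 / ((n : ℝ) * ((n : ℝ) - 1))) *
    ∑ i, ∑ j ∈ Finset.univ.filter (fun j => i < j), (C i j - muEl C) ^ 2

noncomputable def sig2Sum (n : ℕ) (C : Matrix (Fin n) (Fin n) ℝ) : ℝ :=
  (1 / (Nat.doubleFactorial (n - 1) : ℝ)) *
    ∑ S ∈ pairings n, (innerH S C - muSum n C) ^ 2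

/-!
Off the diagonal, `X - C` has entries `f i + f j` with `f i = t * ((n - 1) * μ - ⟨R i, C⟩)`, where
`μ` is the mean off-diagonal entry of `C` and `t = 1 / (n - 2)`. Each unordered pair
`{i, j}` contributes its entry to exactly two of the sums, `⟨R i, C⟩` and `⟨R j, C⟩`, so these
add up to `n * (n - 1) * μ` and `∑ i, f i = 0`. Pairing `f i + f j` with a hollow symmetric
matrix whose row sums are all `r` gives `r * ∑ i, f i`, which vanishes for every `t`; the value
`1 / (n - 2)` is the one that makes all row sums of `X` equal.
-/

lemma sum_sum_mul_add {ι κ R : Type*} [Fintype ι] [Fintype κ] [NonUnitalNonAssocSemiring R]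
    {S : Matrix ι κ R} {r s : R} (hrow : ∀ i, ∑ j, S i j = r) (hcol : ∀ j, ∑ i, S i j = s)
    (f : ι → R) (g : κ → R) :
    ∑ i, ∑ j, S i j * (f i + g j) = r * ∑ i, f i + s * ∑ j, g j := by
  have hf : ∑ i, ∑ j, S i j * f i = r * ∑ i, f i := by
    simp only [← sum_mul, hrow, mul_sum]
  have hg : ∑ i, ∑ j, S i j * g j = s * ∑ j, g j := by
    rw [sum_comm]
    simp only [← sum_mul, hcol, mul_sum]
  simp only [mul_add, sum_add_distrib, hf, hg]

section InnerH

variable {n : ℕ} {S C : Matrix (Fin n) (Fin n) ℝ}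

lemma innerH_congr_offDiag {X Y : Matrix (Fin n) (Fin n) ℝ} (hS : ∀ i, S i i = 0)
    (h : ∀ i j, i ≠ j → X i j = Y i j) : innerH S X = innerH S Y := by
  rw [innerH, innerH]
  congr 1
  refine sum_congr rfl fun i _ => sum_congr rfl fun j _ => ?_
  obtain rfl | hij := eq_or_ne i j
  · simp only [hS, zero_mul]
  · rw [h i j hij]

lemma innerH_add_right (S X Y : Matrix (Fin n) (Fin n) ℝ) :
    innerH S (X + Y) = innerH S X + innerH S Y := by
  simp only [innerH, Matrix.add_apply, mul_add, sum_add_distrib]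

lemma innerH_of_add_of_row_sum_eq {r : ℝ} (hS : S.IsSymm) (hrow : ∀ i, ∑ j, S i j = r)
    (f : Fin n → ℝ) : innerH S (Matrix.of fun i j => f i + f j) = r * ∑ i, f i := by
  have hcol (j : Fin n) : ∑ i, S i j = r := by simpa only [hS.apply] using hrow j
  simp only [innerH, Matrix.of_apply, sum_sum_mul_add hrow hcol]
  ring

lemma innerH_adjR (hC : C.IsSymm) (i : Fin n) : innerH (adjR i) C = ∑ j ∈ {i}ᶜ, C i j := by
  have hsplit (k l : Fin n) : adjR i k l * C k l =
      (if k = i then if l ∈ ({i} : Finset (Fin n))ᶜ then C i l else 0 else 0) +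
        if l = i then if k ∈ ({i} : Finset (Fin n))ᶜ then C i k else 0 else 0 := by
    have := hC.apply k l
    simp only [adjR, Matrix.of_apply, mem_compl, mem_singleton]
    grind
  have hsum : ∑ k, ∑ l, adjR i k l * C k l = ∑ j ∈ {i}ᶜ, C i j + ∑ j ∈ {i}ᶜ, C i j := by
    simp only [hsplit, sum_add_distrib, sum_ite_irrel, sum_const_zero, sum_ite_eq', sum_ite_mem,
      univ_inter, mem_univ, if_true]
  rw [innerH, hsum]
  ring

lemma two_mul_pairSum (hC : C.IsSymm) : 2 * pairSum C = ∑ i, ∑ j ∈ {i}ᶜ, C i j := by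
  have hpair (i j : Fin n) : 2 * C i j = C i j + C j i := by rw [hC.apply, two_mul]
  simp only [pairSum, filter_lt_eq_Ioi, mul_sum, hpair]
  simpa only [hC.apply] using sum_sum_Ioi_add_eq_sum_sum_off_diag fun i j => C j i

lemma mul_sub_one_mul_muEl (C : Matrix (Fin n) (Fin n) ℝ) :
    (n : ℝ) * (n - 1) * muEl C = 2 * pairSum C := by
  obtain hn | hn := Nat.lt_or_ge 1 n
  · have : (n : ℝ) - 1 ≠ 0 := sub_ne_zero.2 (by exact_mod_cast hn.ne')
    have : (n : ℝ) ≠ 0 := by positivity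
    rw [muEl]
    field_simp
  · interval_cases n <;> simp [muEl, pairSum, sum_filter]

lemma sum_innerH_adjR (hC : C.IsSymm) :
    ∑ i, innerH (adjR i) C = n * (n - 1) * muEl C := by
  simp only [innerH_adjR hC, mul_sub_one_mul_muEl, two_mul_pairSum hC]

end InnerH

theorem stmt16_general {n : ℕ} {S C X : Matrix (Fin n) (Fin n) ℝ} {r : ℝ} (t : ℝ)
    (hS : hollowSym S) (hrow : ∀ i, ∑ j, S i j = r) (hC : C.IsSymm)
    (hX : ∀ i j, i ≠ j → X i j =
      C i j + t * (2 * (n - 1) * muEl C - (innerH (adjR i) C + innerH (adjR j) C))) :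
    innerH S X = innerH S C := by
  let f (i : Fin n) : ℝ := t * ((n - 1) * muEl C - innerH (adjR i) C)
  have hf : ∑ i, f i = 0 := by
    simp only [f, ← mul_sum, sum_sub_distrib, sum_innerH_adjR hC, sum_const, card_univ,
      Fintype.card_fin, nsmul_eq_mul]
    ring
  have hXf (i j : Fin n) (hij : i ≠ j) : X i j = (C + Matrix.of fun i j => f i + f j) i j := by
    simp only [hX i j hij, Matrix.add_apply, Matrix.of_apply, f]
    ring
  rw [innerH_congr_offDiag hS.2 hXf, innerH_add_right, innerH_of_add_of_row_sum_eq hS.1 hrow, hf,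
    mul_zero, add_zero]

theorem stmt16 (n : ℕ) (hn : 4 ≤ n) (he : Even n) (C : Matrix (Fin n) (Fin n) ℝ)
    (hC : hollowSym C) (X : Matrix (Fin n) (Fin n) ℝ)
    (hX : X = Matrix.of fun i j =>
      if i = j then 0
      else (2 * ((n : ℝ) - 1) / ((n : ℝ) - 2)) * muEl C + C i j
        - (innerH (adjR i) C + innerH (adjR j) C) / ((n : ℝ) - 2)) :
    ∀ S, IsPairing S → innerH S X = innerH S C := by
  rintro S ⟨hsymm, hdiag, -, hrow⟩
  refine stmt16_general (1 / ((n : ℝ) - 2)) ⟨hsymm, hdiag⟩ hrow hC.1 fun i j hij => ?_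
  simp only [hX, Matrix.of_apply, if_neg hij]
  ring
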